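/- arXiv:1103.5960 — 2 statements merged into one kernel-verified Lean document; each statement's English description precedes it below -/
import Mathlib

section
/- Let E, F, G be real constants with F² + E·G > 0 and Q(u,v) = -E·u² + 2·F·u·v + G·v². Suppose E < 0. Then for every C¹ curve c : [0,1] → ℝ² with continuous nowhere-vanishing derivative satisfying Q(c'(t)) ≤ 0 for all t ∈ [0,1], the derivative of the second component, t ↦ (c'(t)).2, never vanishes, hence has constant sign, and t ↦ (c(t)).2 is strictly monotone; in particular there is no integer n with c(1) - c(0) = (n,0). (This is the causality part of Theorem 2, (iv) ⇒ (vi): if ∂x is spacelike, the flat Lorentzian cylinder admits no closed causal curve.) -/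
/-- The quadratic form of the flat Lorentzian metric `g = -E dx² + 2F dx dy + G dy²`. -/
def Qform (E F G : ℝ) (p : ℝ × ℝ) : ℝ :=
  -E * p.1 ^ 2 + 2 * F * p.1 * p.2 + G * p.2 ^ 2

/-!
On the line `v = 0` the form `-E * u ^ 2 + 2 * F * u * v + G * v ^ 2` reduces to `-E * u ^ 2`,
which is positive definite when `E < 0`; so a nonzero causal vector has `v ≠ 0`. Derivatives have
the intermediate value property (Darboux), hence the `y`-velocity of a causal curve keeps its
sign and `y` never returns to a value it has already taken.
-/

theorem Qform_pos_of_snd_eq_zero {E : ℝ} (hE : E < 0) (F G : ℝ) {p : ℝ × ℝ} (hp : p ≠ 0)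
    (hsnd : p.2 = 0) : 0 < Qform E F G p := by
  have hfst : p.1 ≠ 0 := fun hfst => hp (Prod.ext hfst hsnd)
  calc
    0 < -E * p.1 ^ 2 := mul_pos (neg_pos.mpr hE) (sq_pos_of_ne_zero hfst)
    _ = Qform E F G p := by simp [Qform, hsnd]

theorem snd_ne_zero_of_Qform_nonpos {E F G : ℝ} (hE : E < 0) {p : ℝ × ℝ} (hp : p ≠ 0)
    (hQ : Qform E F G p ≤ 0) : p.2 ≠ 0 :=
  fun hsnd => hQ.not_gt (Qform_pos_of_snd_eq_zero hE F G hp hsnd)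

theorem strictMonoOn_or_strictAntiOn_of_hasDerivWithinAt_ne_zero {s : Set ℝ} (hs : Convex ℝ s)
    {f f' : ℝ → ℝ} (hf : ∀ t ∈ s, HasDerivWithinAt f (f' t) s t) (hf' : ∀ t ∈ s, f' t ≠ 0) :
    StrictMonoOn f s ∨ StrictAntiOn f s := by
  have hcont : ContinuousOn f s := HasDerivWithinAt.continuousOn hf
  have hint : ∀ t ∈ interior s, HasDerivWithinAt f (f' t) (interior s) t := fun t ht =>
    (hf t (interior_subset ht)).mono interior_subset
  rcases hasDerivWithinAt_forall_lt_or_forall_gt_of_forall_ne hs hf hf' with hneg | hpos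
  · exact .inr <| strictAntiOn_of_hasDerivWithinAt_neg hs hcont hint fun t ht =>
      hneg t (interior_subset ht)
  · exact .inl <| strictMonoOn_of_hasDerivWithinAt_pos hs hcont hint fun t ht =>
      hpos t (interior_subset ht)

theorem stmt_7_general {E F G : ℝ} (hE : E < 0) {s : Set ℝ} (hs : Convex ℝ s)
    {c c' : ℝ → ℝ × ℝ} (hderiv : ∀ t ∈ s, HasDerivWithinAt c (c' t) s t)
    (hne : ∀ t ∈ s, c' t ≠ 0) (hcausal : ∀ t ∈ s, Qform E F G (c' t) ≤ 0) :
    (∀ t ∈ s, (c' t).2 ≠ 0) ∧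
    ((∀ t ∈ s, (c' t).2 > 0) ∨ (∀ t ∈ s, (c' t).2 < 0)) ∧
    (StrictMonoOn (fun t => (c t).2) s ∨ StrictAntiOn (fun t => (c t).2) s) ∧
    ∀ a ∈ s, ∀ b ∈ s, a ≠ b → ¬ ∃ x : ℝ, c b - c a = (x, 0) := by
  have hy : ∀ t ∈ s, HasDerivWithinAt (fun t => (c t).2) (c' t).2 s t := fun t ht =>
    (hasFDerivAt_snd (𝕜 := ℝ) (p := c t)).comp_hasDerivWithinAt t (hderiv t ht)
  have hy' : ∀ t ∈ s, (c' t).2 ≠ 0 := fun t ht =>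
    snd_ne_zero_of_Qform_nonpos hE (hne t ht) (hcausal t ht)
  have hmono := strictMonoOn_or_strictAntiOn_of_hasDerivWithinAt_ne_zero hs hy hy'
  have hinj : Set.InjOn (fun t => (c t).2) s := hmono.elim StrictMonoOn.injOn StrictAntiOn.injOn
  refine ⟨hy', (hasDerivWithinAt_forall_lt_or_forall_gt_of_forall_ne hs hy hy').symm, hmono, ?_⟩
  rintro a ha b hb hab ⟨x, hx⟩
  have hclosed : (c b).2 = (c a).2 := sub_eq_zero.mp (congrArg Prod.snd hx)
  exact hab (hinj ha hb hclosed.symm)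

/-- Theorem 2, (iv) ⇒ (vi), causality part: if `E < 0` (the fundamental field `∂x` is
spacelike), then along every causal C¹ curve with nowhere-vanishing derivative the
`y`-velocity never vanishes, hence has constant sign, the second coordinate is strictly
monotone, and the curve cannot be closed on the cylinder. -/
theorem stmt_7 (E F G : ℝ) (hLor : F ^ 2 + E * G > 0) (hE : E < 0)
    (c c' : ℝ → ℝ × ℝ)
    (hderiv : ∀ t ∈ Set.Icc (0 : ℝ) 1, HasDerivAt c (c' t) t)
    (hcont : ContinuousOn c' (Set.Icc (0 : ℝ) 1))
    (hne : ∀ t ∈ Set.Icc (0 : ℝ) 1, c' t ≠ 0)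
    (hcausal : ∀ t ∈ Set.Icc (0 : ℝ) 1, Qform E F G (c' t) ≤ 0) :
    (∀ t ∈ Set.Icc (0 : ℝ) 1, (c' t).2 ≠ 0) ∧
    ((∀ t ∈ Set.Icc (0 : ℝ) 1, (c' t).2 > 0) ∨ (∀ t ∈ Set.Icc (0 : ℝ) 1, (c' t).2 < 0)) ∧
    (StrictMonoOn (fun t => (c t).2) (Set.Icc (0 : ℝ) 1) ∨
      StrictAntiOn (fun t => (c t).2) (Set.Icc (0 : ℝ) 1)) ∧
    ¬ ∃ n : ℤ, c 1 - c 0 = ((n : ℝ), 0) := by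
  obtain ⟨hy', hsign, hmono, hnot_closed⟩ :=
    stmt_7_general hE (convex_Icc 0 1) (fun t ht => (hderiv t ht).hasDerivWithinAt) hne hcausal
  exact ⟨hy', hsign, hmono, fun ⟨n, hn⟩ => hnot_closed 0 (by simp) 1 (by simp) zero_ne_one ⟨n, hn⟩⟩
end

section
/- Let E, F, G be real constants with F² + E·G > 0 and Q(u,v) = -E·u² + 2·F·u·v + G·v². Consider the three conditions: (a) through every point of ℝ² there passes a C¹ curve c : [0,1] → ℝ² with Q(c'(t)) < 0 for all t and c(1) - c(0) = (n,0) for some integer n (totally vicious); (b) there exists a C¹ curve with continuous nowhere-vanishing derivative, Q(c'(t)) ≤ 0 for all t and c(1) - c(0) = (n,0) for some integer n, but no such curve with Q(c'(t)) < 0 for all t (chronological but non-causal); (c) there is no C¹ curve with continuous nowhere-vanishing derivative, Q(c'(t)) ≤ 0 for all t and c(1) - c(0) = (n,0) for some integer n (causal). Then exactly one of (a), (b), (c) holds, and (a) holds iff E > 0, (b) holds iff E = 0, (c) holds iff E < 0. (This is the concluding classification of the paper: a conformally flat Lorentzian cylinder spacetime occupies exactly one of three steps of the causal ladder — totally vicious,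 chronological but non-causal, or causal/globally hyperbolic — according to the causal character of ∂x.) -/
/-- The flat Lorentzian cylinder admits a closed causal curve. -/
def ExistsClosedCausal (E F G : ℝ) : Prop :=
  ∃ c c' : ℝ → ℝ × ℝ,
    (∀ t ∈ Set.Icc (0 : ℝ) 1, HasDerivAt c (c' t) t) ∧
    ContinuousOn c' (Set.Icc (0 : ℝ) 1) ∧
    (∀ t ∈ Set.Icc (0 : ℝ) 1, c' t ≠ 0) ∧
    (∀ t ∈ Set.Icc (0 : ℝ) 1, Qform E F G (c' t) ≤ 0) ∧
    ∃ n : ℤ, c 1 - c 0 = ((n : ℝ), 0)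

/-- The flat Lorentzian cylinder admits a closed timelike curve. -/
def ExistsClosedTimelike (E F G : ℝ) : Prop :=
  ∃ c c' : ℝ → ℝ × ℝ,
    (∀ t ∈ Set.Icc (0 : ℝ) 1, HasDerivAt c (c' t) t) ∧
    ContinuousOn c' (Set.Icc (0 : ℝ) 1) ∧
    (∀ t ∈ Set.Icc (0 : ℝ) 1, Qform E F G (c' t) < 0) ∧
    ∃ n : ℤ, c 1 - c 0 = ((n : ℝ), 0)

/-- The flat Lorentzian cylinder is totally vicious: through every point there passes
a closed timelike curve. -/
def TotallyVicious (E F G : ℝ) : Prop :=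
  ∀ x₀ y₀ : ℝ, ∃ c c' : ℝ → ℝ × ℝ,
    c 0 = (x₀, y₀) ∧
    (∀ t ∈ Set.Icc (0 : ℝ) 1, HasDerivAt c (c' t) t) ∧
    ContinuousOn c' (Set.Icc (0 : ℝ) 1) ∧
    (∀ t ∈ Set.Icc (0 : ℝ) 1, Qform E F G (c' t) < 0) ∧
    ∃ n : ℤ, c 1 - c 0 = ((n : ℝ), 0)

/-!
A curve that closes up on the cylinder has endpoints of equal height, so by Rolle's theorem its
velocity is horizontal at some time. Hence a closed causal or timelike curve forces a nonzero
horizontal vector of the same causal character, which is that of `∂x`; conversely, when `∂x` is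
causal or timelike, so are the horizontal circles, and they pass through every point.
-/

theorem exists_dual_hasDerivAt_eq_zero {V : Type*} [NormedAddCommGroup V] [NormedSpace ℝ V]
    (φ : StrongDual ℝ V) {c c' : ℝ → V} {a b : ℝ} (hab : a < b)
    (hcont : ContinuousOn c (Set.Icc a b)) (hc : ∀ t ∈ Set.Ioo a b, HasDerivAt c (c' t) t)
    (hends : φ (c a) = φ (c b)) : ∃ t ∈ Set.Ioo a b, φ (c' t) = 0 :=
  exists_hasDerivAt_eq_zero hab (φ.continuous.comp_continuousOn hcont) hends
    fun t ht => φ.hasFDerivAt.comp_hasDerivAt t (hc t ht)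

theorem exists_hasDerivAt_eq_horizontal {c c' : ℝ → ℝ × ℝ} {a b w : ℝ} (hab : a < b)
    (hc : ∀ t ∈ Set.Icc a b, HasDerivAt c (c' t) t) (hclosed : c b - c a = (w, 0)) :
    ∃ t ∈ Set.Icc a b, ∃ u : ℝ, c' t = (u, 0) := by
  have hheight : (c a).2 = (c b).2 :=
    (sub_eq_zero.mp (congrArg Prod.snd hclosed)).symm
  obtain ⟨t, ht, hzero⟩ := exists_dual_hasDerivAt_eq_zero (ContinuousLinearMap.snd ℝ ℝ ℝ) hab
    (fun t ht => (hc t ht).continuousAt.continuousWithinAt)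
    (fun t ht => hc t (Set.Ioo_subset_Icc_self ht)) hheight
  exact ⟨t, Set.Ioo_subset_Icc_self ht, (c' t).1, Prod.ext rfl hzero⟩

theorem hasDerivAt_lineMap_add {V : Type*} [NormedAddCommGroup V] [NormedSpace ℝ V]
    (p v : V) (t : ℝ) : HasDerivAt (AffineMap.lineMap (k := ℝ) p (p + v)) v t := by
  simpa only [add_sub_cancel_left] using AffineMap.hasDerivAt_lineMap (a := p) (b := p + v)

section CausalCharacter

variable {E F G : ℝ}

theorem Qform_horizontal_neg_iff {u : ℝ} : Qform E F G (u, 0) < 0 ↔ 0 < E ∧ u ≠ 0 := by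
  rcases eq_or_ne u 0 with rfl | hu
  · simp [Qform]
  · have hsq : 0 < u ^ 2 := by positivity
    simp [Qform, hu, hsq]

theorem Qform_horizontal_nonpos_iff {u : ℝ} (hu : u ≠ 0) :
    Qform E F G (u, 0) ≤ 0 ↔ 0 ≤ E := by
  have hsq : 0 < u ^ 2 := by positivity
  simp [Qform, hsq]

theorem totallyVicious_of_pos (hE : 0 < E) : TotallyVicious E F G := fun x₀ y₀ =>
  ⟨AffineMap.lineMap (x₀, y₀) ((x₀, y₀) + (1, 0)), fun _ => (1, 0),
    AffineMap.lineMap_apply_zero _ _, fun t _ => hasDerivAt_lineMap_add _ _ t,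
    continuousOn_const, fun _ _ => Qform_horizontal_neg_iff.mpr ⟨hE, one_ne_zero⟩, 1, by simp⟩

theorem TotallyVicious.existsClosedTimelike (h : TotallyVicious E F G) :
    ExistsClosedTimelike E F G :=
  let ⟨c, c', _, hc⟩ := h 0 0
  ⟨c, c', hc⟩

theorem existsClosedTimelike_iff_pos : ExistsClosedTimelike E F G ↔ 0 < E := by
  refine ⟨?_, fun hE => (totallyVicious_of_pos hE).existsClosedTimelike⟩
  rintro ⟨c, c', hc, -, htimelike, n, hclosed⟩
  obtain ⟨t, ht, u, hu⟩ := exists_hasDerivAt_eq_horizontal zero_lt_one hc hclosed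
  exact (Qform_horizontal_neg_iff.mp (hu ▸ htimelike t ht)).1

theorem totallyVicious_iff_pos : TotallyVicious E F G ↔ 0 < E :=
  ⟨fun h => existsClosedTimelike_iff_pos.mp h.existsClosedTimelike, totallyVicious_of_pos⟩

theorem existsClosedCausal_iff_nonneg : ExistsClosedCausal E F G ↔ 0 ≤ E := by
  constructor
  · rintro ⟨c, c', hc, -, hne, hcausal, n, hclosed⟩
    obtain ⟨t, ht, u, hu⟩ := exists_hasDerivAt_eq_horizontal zero_lt_one hc hclosed
    have hu₀ : u ≠ 0 := fun h => hne t ht (by rw [hu, h, Prod.mk_zero_zero])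
    exact (Qform_horizontal_nonpos_iff hu₀).mp (hu ▸ hcausal t ht)
  · intro hE
    exact ⟨AffineMap.lineMap 0 (0 + (1, 0)), fun _ => (1, 0),
      fun t _ => hasDerivAt_lineMap_add _ _ t, continuousOn_const, fun _ _ => by simp,
      fun _ _ => (Qform_horizontal_nonpos_iff one_ne_zero).mpr hE, 1, by simp⟩

end CausalCharacter

theorem stmt_13_general (E F G : ℝ) :
    ((TotallyVicious E F G ∧
        ¬ (ExistsClosedCausal E F G ∧ ¬ ExistsClosedTimelike E F G) ∧
        ¬ ¬ ExistsClosedCausal E F G) ∨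
      (¬ TotallyVicious E F G ∧
        (ExistsClosedCausal E F G ∧ ¬ ExistsClosedTimelike E F G) ∧
        ¬ ¬ ExistsClosedCausal E F G) ∨
      (¬ TotallyVicious E F G ∧
        ¬ (ExistsClosedCausal E F G ∧ ¬ ExistsClosedTimelike E F G) ∧
        ¬ ExistsClosedCausal E F G)) ∧
    (TotallyVicious E F G ↔ E > 0) ∧
    ((ExistsClosedCausal E F G ∧ ¬ ExistsClosedTimelike E F G) ↔ E = 0) ∧
    (¬ ExistsClosedCausal E F G ↔ E < 0) := by
  rw [totallyVicious_iff_pos, existsClosedTimelike_iff_pos, existsClosedCausal_iff_nonneg]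
  rcases lt_trichotomy E 0 with hE | rfl | hE
  · simp [hE, hE.ne, hE.le, hE.not_ge]
  · simp
  · simp [hE, hE.ne', hE.le]

/-- Causal classification of conformally flat Lorentzian cylinders: exactly one of
"totally vicious", "chronological but non-causal", "causal" holds, according as
`E > 0`, `E = 0`, `E < 0`. -/
theorem stmt_13 (E F G : ℝ) (hLor : F ^ 2 + E * G > 0) :
    ((TotallyVicious E F G ∧
        ¬ (ExistsClosedCausal E F G ∧ ¬ ExistsClosedTimelike E F G) ∧
        ¬ ¬ ExistsClosedCausal E F G) ∨
      (¬ TotallyVicious E F G ∧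
        (ExistsClosedCausal E F G ∧ ¬ ExistsClosedTimelike E F G) ∧
        ¬ ¬ ExistsClosedCausal E F G) ∨
      (¬ TotallyVicious E F G ∧
        ¬ (ExistsClosedCausal E F G ∧ ¬ ExistsClosedTimelike E F G) ∧
        ¬ ExistsClosedCausal E F G)) ∧
    (TotallyVicious E F G ↔ E > 0) ∧
    ((ExistsClosedCausal E F G ∧ ¬ ExistsClosedTimelike E F G) ↔ E = 0) ∧
    (¬ ExistsClosedCausal E F G ↔ E < 0) :=
  stmt_13_general E F G
end
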